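/- arXiv:1407.1502 — 2 statements merged into one kernel-verified Lean document; each statement's English description precedes it below -/
import Mathlib

section
/- Let W ⊆ ℝⁿ be an open convex set and let f : ℝⁿ → ℝⁿ be continuously differentiable on W such that, at every point a ∈ W, all off-diagonal entries of the Jacobian matrix of f at a are nonnegative (the Jacobian is Metzler). Then for any x, y ∈ W with x ≤ y componentwise and x_i = y_i for some index i ∈ {1,…,n}, one has f_i(x) ≤ f_i(y). -/
open Set

/-! By the mean value theorem, `f y i - f x i` is the `i`-th entry of the Jacobian at some point of
`[x, y]` applied to `y - x ≥ 0`. Since `(y - x) i = 0`, the diagonal entry, the only one in row `i`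
that may be negative, does not contribute. -/

/-- A Metzler matrix: a square matrix whose off-diagonal entries are all nonnegative. It is used to
state the sign condition on Jacobian matrices. -/
def IsMetzler {ι R : Type*} [Zero R] [LE R] (A : Matrix ι ι R) : Prop :=
  ∀ i j, i ≠ j → 0 ≤ A i j

theorem IsMetzler.mulVec_apply_nonneg {ι R : Type*} [Fintype ι] [NonUnitalNonAssocSemiring R]
    [PartialOrder R] [IsOrderedAddMonoid R] [PosMulMono R] {A : Matrix ι ι R} (hA : IsMetzler A)
    {v : ι → R} (hv : 0 ≤ v) {i : ι} (hi : v i = 0) : 0 ≤ A.mulVec v i := by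
  refine Finset.sum_nonneg fun j _ => ?_
  obtain rfl | hij := eq_or_ne i j
  · rw [hi, mul_zero]
  · exact mul_nonneg (hA i j hij) (hv j)

theorem isMetzler_toMatrix'_iff {ι R : Type*} [Fintype ι] [DecidableEq ι] [CommSemiring R] [LE R]
    {L : (ι → R) →ₗ[R] ι → R} :
    IsMetzler L.toMatrix' ↔ ∀ i j, i ≠ j → 0 ≤ L (Pi.single j 1) i := by
  simp only [IsMetzler, LinearMap.toMatrix'_apply]

theorem le_of_hasFDerivWithinAt_nonneg {E : Type*} [NormedAddCommGroup E] [NormedSpace ℝ E]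
    {s : Set E} (hs : Convex ℝ s) {φ : E → ℝ} {φ' : E → E →L[ℝ] ℝ}
    (hφ : ∀ z ∈ s, HasFDerivWithinAt φ (φ' z) s z) {x y : E} (hx : x ∈ s) (hy : y ∈ s)
    (hφ' : ∀ z ∈ segment ℝ x y, 0 ≤ φ' z (y - x)) : φ x ≤ φ y := by
  obtain ⟨z, hz, hmvt⟩ := domain_mvt hφ hs hx hy
  exact sub_nonneg.1 (hmvt ▸ hφ' z hz)

theorem offDiagonal_monotone_general {ι : Type*} [Fintype ι] [DecidableEq ι]
    {W : Set (ι → ℝ)} (hW : Convex ℝ W) {f : (ι → ℝ) → ι → ℝ}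
    {f' : (ι → ℝ) → (ι → ℝ) →L[ℝ] ι → ℝ} (hf : ∀ a ∈ W, HasFDerivWithinAt f (f' a) W a)
    (hMetzler : ∀ a ∈ W, IsMetzler (f' a).toLinearMap.toMatrix')
    {x y : ι → ℝ} (hx : x ∈ W) (hy : y ∈ W) (hxy : x ≤ y) {i : ι} (hi : x i = y i) :
    f x i ≤ f y i := by
  refine le_of_hasFDerivWithinAt_nonneg hW
    (fun a ha => hasFDerivWithinAt_pi'.1 (hf a ha) i) hx hy fun z hz => ?_
  have hrow : 0 ≤ (f' z).toLinearMap.toMatrix'.mulVec (y - x) i :=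
    (hMetzler z (hW.segment_subset hx hy hz)).mulVec_apply_nonneg (sub_nonneg.2 hxy)
      (sub_eq_zero.2 hi.symm)
  rwa [LinearMap.toMatrix'_mulVec] at hrow

/-- If `f` is continuously differentiable on the open convex set `W` with
Metzler Jacobian at every point of `W`, then for `x ≤ y` in `W` with `x i = y i`,
one has `f x i ≤ f y i`. -/
theorem offDiagonal_monotone (n : ℕ) (hn : 1 ≤ n)
    (W : Set (Fin n → ℝ)) (hWo : IsOpen W) (hWc : Convex ℝ W)
    (f : (Fin n → ℝ) → (Fin n → ℝ)) (hf : ContDiffOn ℝ 1 f W)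
    (hMetzler : ∀ a ∈ W, ∀ i j : Fin n, i ≠ j → 0 ≤ fderiv ℝ f a (Pi.single j 1) i)
    (x y : Fin n → ℝ) (hx : x ∈ W) (hy : y ∈ W) (hxy : x ≤ y)
    (i : Fin n) (hi : x i = y i) :
    f x i ≤ f y i := by
  have hderiv (a) (ha : a ∈ W) : HasFDerivWithinAt f (fderiv ℝ f a) W a :=
    ((hf.differentiableOn one_ne_zero).hasFDerivAt (hWo.mem_nhds ha)).hasFDerivWithinAt
  exact offDiagonal_monotone_general hWc hderiv
    (fun a ha => isMetzler_toMatrix'_iff.2 (hMetzler a ha)) hx hy hxy hi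
end

section
/- Let A ∈ ℝ^{n×n} be Metzler and B ∈ ℝ^{n×n} be entrywise nonnegative. Then there exists a vector v ∈ ℝⁿ with v > 0 and (A + B)v < 0 (strict componentwise) if and only if every differentiable function x : [0,∞) → ℝⁿ satisfying x'(t) = (A + B) x(t) for all t ≥ 0 converges to 0 as t → ∞. -/
/-!
If `M` has nonnegative off-diagonal entries, then `M + c • 1` is entrywise nonnegative for large
`c`, so `exp (t • M)`, a positive multiple of `exp (t • (M + c • 1))`, is entrywise nonnegative for
`t ≥ 0`, with positive diagonal. All solutions of `x' = M x` are of the form `exp (t • M) x₀`.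

If `v > 0` and `M v < 0`, then `M v ≤ -ε v` for some `ε > 0`. The function `exp (t • (M + ε • 1)) v`
has derivative `exp (t • (M + ε • 1)) (M + ε • 1) v ≤ 0`, so it never exceeds `v`, which says
`exp (t • M) v ≤ exp (-ε t) v`. Any `x₀` lies between `-v` and `v` up to scaling, and since
`exp (t • M)` is monotone its orbit decays at the same rate.

Conversely, if the orbit of a vector `w > 0` tends to `0`, it lies strictly below `w` at some time
`T > 0`. Then `v = ∫ t in 0..T, exp (t • M) w` is positive and `M v = exp (T • M) w - w < 0`.
-/

open Set Filter

/-- A matrix is *Metzler* if all its off-diagonal entries are nonnegative. -/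
def Metzler (n : ℕ) (A : Matrix (Fin n) (Fin n) ℝ) : Prop :=
  ∀ i j : Fin n, i ≠ j → 0 ≤ A i j

open NormedSpace (exp)
open scoped Matrix Topology

variable {ι : Type*}

lemma exists_pos_forall_mul_lt [Finite ι] {v : ι → ℝ} (hv : ∀ i, 0 < v i) (w : ι → ℝ) :
    ∃ ε > 0, ∀ i, ε * w i < v i := by
  have h_lim (i : ι) : Tendsto (fun ε : ℝ ↦ ε * w i) (𝓝[>] 0) (𝓝 0) :=
    tendsto_nhdsWithin_of_tendsto_nhds (Continuous.tendsto' (by fun_prop) _ _ (zero_mul _))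
  have h_small : ∀ᶠ ε in 𝓝[>] (0 : ℝ), ∀ i, ε * w i < v i :=
    eventually_all.2 fun i ↦ (h_lim i).eventually_lt_const (hv i)
  exact (eventually_mem_nhdsWithin.and h_small).exists

lemma exists_forall_add_smul_one_apply_nonneg [Finite ι] [DecidableEq ι] {M : Matrix ι ι ℝ}
    (hM : Pairwise (0 ≤ M · ·)) : ∃ c : ℝ, ∀ i j, 0 ≤ (M + c • 1) i j := by
  obtain ⟨c, hc⟩ := (finite_range fun i ↦ -M i i).bddAbove
  refine ⟨c, fun i j ↦ ?_⟩
  obtain rfl | hij := eq_or_ne i j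
  · simpa [neg_le_iff_add_nonneg'] using hc (mem_range_self i)
  · simpa [hij] using hM hij

section Entrywise

variable {m n R : Type*} [Fintype n]

lemma mulVec_monotone_of_apply_nonneg [NonUnitalNonAssocSemiring R] [PartialOrder R]
    [IsOrderedAddMonoid R] [PosMulMono R] {P : Matrix m n R} (hP : ∀ i j, 0 ≤ P i j) :
    Monotone (P *ᵥ ·) :=
  fun _ _ hvw i ↦ Finset.sum_le_sum fun j _ ↦ mul_le_mul_of_nonneg_left (hvw j) (hP i j)

lemma abs_mulVec_le_of_apply_nonneg [NonUnitalNonAssocRing R] [Lattice R]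
    [IsOrderedAddMonoid R] [PosMulMono R] {P : Matrix m n R} (hP : ∀ i j, 0 ≤ P i j)
    (w : n → R) : |P *ᵥ w| ≤ P *ᵥ |w| :=
  abs_le'.2 ⟨mulVec_monotone_of_apply_nonneg hP (le_abs_self w),
    (Matrix.mulVec_neg w P).symm.trans_le (mulVec_monotone_of_apply_nonneg hP (neg_le_abs w))⟩

end Entrywise

section MatrixExponential

variable [Fintype ι] [DecidableEq ι] {M : Matrix ι ι ℝ}

open scoped Matrix.Norms.Operator in
lemma one_apply_le_exp_apply {P : Matrix ι ι ℝ} (hP : ∀ i j, 0 ≤ P i j) (i j : ι) :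
    (1 : Matrix ι ι ℝ) i j ≤ exp P i j := by
  have h_series : HasSum (fun k : ℕ ↦ ((k.factorial : ℝ)⁻¹ • P ^ k) i j) (exp P i j) :=
    (NormedSpace.exp_series_hasSum_exp' (𝕂 := ℝ) P).map (Matrix.entryAddMonoidHom ℝ i j)
      (continuous_id.matrix_elem i j)
  simpa using le_hasSum h_series 0 fun k _ ↦
    mul_nonneg (by positivity) (Matrix.pow_apply_nonneg hP k i j)

lemma exp_smul_add_smul_one (M : Matrix ι ι ℝ) (c t : ℝ) :
    exp (t • (M + c • 1)) = Real.exp (t * c) • exp (t • M) := by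
  have h_scalar : exp ((t * c) • (1 : Matrix ι ι ℝ)) = Real.exp (t * c) • 1 := by
    rw [Matrix.smul_one_eq_diagonal, Matrix.exp_diagonal, Matrix.smul_one_eq_diagonal,
      Pi.exp_def, Real.exp_eq_exp_ℝ]
  rw [smul_add, smul_smul, Matrix.exp_add_of_commute _ _ ((Commute.one_right _).smul_right _),
    h_scalar, mul_smul_one]

lemma exists_pos_mul_one_apply_le_exp_smul_apply (hM : Pairwise (0 ≤ M · ·)) {t : ℝ}
    (ht : 0 ≤ t) : ∃ a > 0, ∀ i j, a * (1 : Matrix ι ι ℝ) i j ≤ exp (t • M) i j := by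
  obtain ⟨c, hc⟩ := exists_forall_add_smul_one_apply_nonneg hM
  refine ⟨(Real.exp (t * c))⁻¹, by positivity, fun i j ↦ ?_⟩
  rw [inv_mul_le_iff₀ (Real.exp_pos _)]
  have h_exp : exp (t • (M + c • 1)) i j = Real.exp (t * c) * exp (t • M) i j := by
    rw [exp_smul_add_smul_one, Matrix.smul_apply, smul_eq_mul]
  exact h_exp ▸ one_apply_le_exp_apply (fun i j ↦ mul_nonneg ht (hc i j)) i j

lemma exp_smul_apply_nonneg (hM : Pairwise (0 ≤ M · ·)) {t : ℝ} (ht : 0 ≤ t) (i j : ι) :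
    0 ≤ exp (t • M) i j := by
  obtain ⟨a, ha, h_le⟩ := exists_pos_mul_one_apply_le_exp_smul_apply hM ht
  exact (mul_nonneg ha.le (by rw [Matrix.one_apply]; positivity)).trans (h_le i j)

lemma exp_smul_apply_self_pos (hM : Pairwise (0 ≤ M · ·)) {t : ℝ} (ht : 0 ≤ t) (i : ι) :
    0 < exp (t • M) i i := by
  obtain ⟨a, ha, h_le⟩ := exists_pos_mul_one_apply_le_exp_smul_apply hM ht
  exact ha.trans_le (by simpa using h_le i i)

lemma exp_smul_mulVec_pos (hM : Pairwise (0 ≤ M · ·)) {w : ι → ℝ} (hw : ∀ i, 0 < w i) {t : ℝ}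
    (ht : 0 ≤ t) (i : ι) : 0 < (exp (t • M) *ᵥ w) i :=
  Finset.sum_pos' (fun j _ ↦ mul_nonneg (exp_smul_apply_nonneg hM ht i j) (hw j).le)
    ⟨i, Finset.mem_univ i, mul_pos (exp_smul_apply_self_pos hM ht i) (hw i)⟩

open scoped Matrix.Norms.Operator in
lemma hasDerivAt_exp_smul_mulVec (M : Matrix ι ι ℝ) (w : ι → ℝ) (t : ℝ) :
    HasDerivAt (fun s : ℝ ↦ exp (s • M) *ᵥ w) (M *ᵥ exp (t • M) *ᵥ w) t := by
  let evalAt : Matrix ι ι ℝ →L[ℝ] ι → ℝ :=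
    ((Matrix.mulVecBilin ℝ ℝ).flip w).toContinuousLinearMap
  have h_exp := evalAt.hasFDerivAt.comp_hasDerivAt t
    (hasDerivAt_exp_smul_const' (𝕂 := ℝ) M t)
  rw [Matrix.mulVec_mulVec]
  exact h_exp

lemma continuous_exp_smul_mulVec (M : Matrix ι ι ℝ) (w : ι → ℝ) :
    Continuous fun t : ℝ ↦ exp (t • M) *ᵥ w :=
  continuous_iff_continuousAt.2 fun t ↦ (hasDerivAt_exp_smul_mulVec M w t).continuousAt

lemma eqOn_exp_smul_mulVec_of_hasDerivWithinAt {x : ℝ → ι → ℝ}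
    (hx : ∀ t, 0 ≤ t → HasDerivWithinAt x (M *ᵥ x t) (Ici 0) t) :
    EqOn x (fun t ↦ exp (t • M) *ᵥ x 0) (Ici 0) := by
  intro t ht
  exact ODE_solution_unique (a := 0) (b := t) (v := fun _ ↦ (M *ᵥ ·))
    (fun _ ↦ M.mulVecLin.toContinuousLinearMap.lipschitz)
    (fun s hs ↦ (hx s hs.1).continuousWithinAt.mono Icc_subset_Ici_self)
    (fun s hs ↦ (hx s hs.1).mono (Ici_subset_Ici.2 hs.1))
    (continuous_exp_smul_mulVec M _).continuousOn
    (fun s _ ↦ (hasDerivAt_exp_smul_mulVec M _ s).hasDerivWithinAt)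
    (by simp) ⟨ht, le_rfl⟩

lemma exp_smul_mulVec_le_self (hM : Pairwise (0 ≤ M · ·)) {v : ι → ℝ} (hv : M *ᵥ v ≤ 0) {t : ℝ}
    (ht : 0 ≤ t) : exp (t • M) *ᵥ v ≤ v := by
  have h_deriv (s : ℝ) (i : ι) :
      HasDerivAt (fun s : ℝ ↦ (exp (s • M) *ᵥ v) i) ((exp (s • M) *ᵥ M *ᵥ v) i) s := by
    have h_comm : M *ᵥ exp (s • M) *ᵥ v = exp (s • M) *ᵥ M *ᵥ v := by
      rw [Matrix.mulVec_mulVec, Matrix.mulVec_mulVec,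
        (((Commute.refl M).smul_right s).exp_right).eq]
    exact hasDerivAt_pi.1 (h_comm ▸ hasDerivAt_exp_smul_mulVec M v s) i
  have h_deriv_nonpos (s : ℝ) (hs : 0 ≤ s) : exp (s • M) *ᵥ M *ᵥ v ≤ 0 :=
    (mulVec_monotone_of_apply_nonneg (exp_smul_apply_nonneg hM hs) hv).trans_eq
      (Matrix.mulVec_zero _)
  intro i
  have h_anti : AntitoneOn (fun s : ℝ ↦ (exp (s • M) *ᵥ v) i) (Ici 0) :=
    antitoneOn_of_hasDerivWithinAt_nonpos (convex_Ici 0)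
      (fun s _ ↦ (h_deriv s i).continuousAt.continuousWithinAt)
      (fun s _ ↦ (h_deriv s i).hasDerivWithinAt)
      (fun s hs ↦ h_deriv_nonpos s (interior_subset hs) i)
  simpa using h_anti self_mem_Ici ht ht

lemma exp_smul_mulVec_le_of_mulVec_le_smul (hM : Pairwise (0 ≤ M · ·)) {v : ι → ℝ} {c : ℝ}
    (hv : M *ᵥ v ≤ c • v) {t : ℝ} (ht : 0 ≤ t) :
    exp (t • M) *ᵥ v ≤ Real.exp (t * c) • v := by
  set N := M + (-c) • (1 : Matrix ι ι ℝ) with hN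
  have hN_offDiag : Pairwise (0 ≤ N · ·) := fun i j hij ↦ by simpa [N, hij] using hM hij
  have hNv : N *ᵥ v ≤ 0 := by
    simpa [N, Matrix.add_mulVec, Matrix.neg_mulVec, Matrix.smul_mulVec] using hv
  calc exp (t • M) *ᵥ v = Real.exp (t * c) • exp (t • N) *ᵥ v := by
        rw [← Matrix.smul_mulVec, ← exp_smul_add_smul_one, hN, neg_smul, neg_add_cancel_right]
    _ ≤ Real.exp (t * c) • v :=
        smul_le_smul_of_nonneg_left (exp_smul_mulVec_le_self hN_offDiag hNv ht) (by positivity)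

lemma tendsto_exp_smul_mulVec_zero (hM : Pairwise (0 ≤ M · ·)) {v : ι → ℝ} (hv : ∀ i, 0 < v i)
    (hMv : ∀ i, (M *ᵥ v) i < 0) (w : ι → ℝ) :
    Tendsto (fun t : ℝ ↦ exp (t • M) *ᵥ w) atTop (𝓝 0) := by
  obtain ⟨ε, hε, hεv⟩ := exists_pos_forall_mul_lt (fun i ↦ neg_pos.2 (hMv i)) v
  obtain ⟨δ, hδ, hδw⟩ := exists_pos_forall_mul_lt hv |w|
  have hMv_le : M *ᵥ v ≤ (-ε) • v := fun i ↦ by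
    simpa using (lt_neg_of_lt_neg (hεv i)).le
  have h_bound (t : ℝ) (ht : 0 ≤ t) : δ • |exp (t • M) *ᵥ w| ≤ Real.exp (t * -ε) • v := by
    have h_nonneg := exp_smul_apply_nonneg hM ht
    calc δ • |exp (t • M) *ᵥ w| ≤ δ • exp (t • M) *ᵥ |w| :=
          smul_le_smul_of_nonneg_left (abs_mulVec_le_of_apply_nonneg h_nonneg w) hδ.le
      _ = exp (t • M) *ᵥ (δ • |w|) := (Matrix.mulVec_smul _ _ _).symm
      _ ≤ exp (t • M) *ᵥ v := mulVec_monotone_of_apply_nonneg h_nonneg fun i ↦ (hδw i).le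
      _ ≤ Real.exp (t * -ε) • v := exp_smul_mulVec_le_of_mulVec_le_smul hM hMv_le ht
  have h_decay : Tendsto (fun t : ℝ ↦ Real.exp (t * -ε)) atTop (𝓝 0) :=
    Real.tendsto_exp_atBot.comp (tendsto_id.atTop_mul_const_of_neg (neg_neg_of_pos hε))
  refine tendsto_pi_nhds.2 fun i ↦ squeeze_zero_norm' (a := fun t ↦ Real.exp (t * -ε) * v i / δ) ?_
    (by simpa using (h_decay.mul_const (v i)).div_const δ)
  filter_upwards [eventually_ge_atTop 0] with t ht
  rw [le_div_iff₀' hδ]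
  exact h_bound t ht i

lemma mulVec_integral_exp_smul_mulVec (M : Matrix ι ι ℝ) (w : ι → ℝ) (T : ℝ) :
    M *ᵥ ∫ t in (0 : ℝ)..T, exp (t • M) *ᵥ w = exp (T • M) *ᵥ w - w := by
  have h_cont := continuous_exp_smul_mulVec M w
  calc M *ᵥ ∫ t in (0 : ℝ)..T, exp (t • M) *ᵥ w
      = ∫ t in (0 : ℝ)..T, M *ᵥ exp (t • M) *ᵥ w :=
        (M.mulVecLin.toContinuousLinearMap.intervalIntegral_comp_comm
          (h_cont.intervalIntegrable 0 T)).symm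
    _ = exp (T • M) *ᵥ w - exp ((0 : ℝ) • M) *ᵥ w :=
        intervalIntegral.integral_eq_sub_of_hasDerivAt
          (fun t _ ↦ hasDerivAt_exp_smul_mulVec M w t)
          ((Continuous.matrix_mulVec continuous_const h_cont).intervalIntegrable 0 T)
    _ = exp (T • M) *ᵥ w - w := by simp

lemma exists_pos_mulVec_neg_of_tendsto (hM : Pairwise (0 ≤ M · ·)) {w : ι → ℝ}
    (hw : ∀ i, 0 < w i) (h_lim : Tendsto (fun t : ℝ ↦ exp (t • M) *ᵥ w) atTop (𝓝 0)) :
    ∃ v : ι → ℝ, (∀ i, 0 < v i) ∧ ∀ i, (M *ᵥ v) i < 0 := by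
  have h_lt : ∀ᶠ T : ℝ in atTop, ∀ i, (exp (T • M) *ᵥ w) i < w i :=
    eventually_all.2 fun i ↦ (tendsto_pi_nhds.1 h_lim i).eventually_lt_const (hw i)
  obtain ⟨T, hT, hT_pos⟩ := (h_lt.and (eventually_gt_atTop 0)).exists
  have h_cont := continuous_exp_smul_mulVec M w
  refine ⟨∫ t in (0 : ℝ)..T, exp (t • M) *ᵥ w, fun i ↦ ?_, fun i ↦ ?_⟩
  · have h_apply : (∫ t in (0 : ℝ)..T, exp (t • M) *ᵥ w) i =
        ∫ t in (0 : ℝ)..T, (exp (t • M) *ᵥ w) i :=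
      ((ContinuousLinearMap.proj (R := ℝ) i).intervalIntegral_comp_comm
        (h_cont.intervalIntegrable 0 T)).symm
    rw [h_apply]
    exact intervalIntegral.intervalIntegral_pos_of_pos_on
      (((continuous_apply i).comp h_cont).intervalIntegrable 0 T)
      (fun t ht ↦ exp_smul_mulVec_pos hM hw ht.1.le i) hT_pos
  · rw [mulVec_integral_exp_smul_mulVec]
    exact sub_neg.2 (hT i)

end MatrixExponential

theorem positive_linear_undelayed_gas_general [Fintype ι] {M : Matrix ι ι ℝ}
    (hM : Pairwise (0 ≤ M · ·)) :
    (∃ v : ι → ℝ, (∀ i, 0 < v i) ∧ ∀ i, (M *ᵥ v) i < 0) ↔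
      ∀ x : ℝ → ι → ℝ, (∀ t, 0 ≤ t → HasDerivWithinAt x (M *ᵥ x t) (Ici 0) t) →
        Tendsto x atTop (𝓝 0) := by
  classical
  constructor
  · rintro ⟨v, hv, hMv⟩ x hx
    have h_eq : (fun t ↦ exp (t • M) *ᵥ x 0) =ᶠ[atTop] x :=
      (eventually_ge_atTop 0).mono fun t ht ↦
        (eqOn_exp_smul_mulVec_of_hasDerivWithinAt hx ht).symm
    exact (tendsto_exp_smul_mulVec_zero hM hv hMv (x 0)).congr' h_eq
  · intro h_gas
    refine exists_pos_mulVec_neg_of_tendsto hM (w := 1) (fun _ ↦ one_pos) (h_gas _ fun t _ ↦ ?_)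
    exact (hasDerivAt_exp_smul_mulVec M 1 t).hasDerivWithinAt

/-- For `A` Metzler and `B` nonnegative, a vector `v > 0` with
`(A + B) v < 0` exists iff every differentiable solution of `ẋ = (A + B) x` on `[0, ∞)`
converges to `0`. -/
theorem positive_linear_undelayed_gas (n : ℕ) (hn : 1 ≤ n)
    (A B : Matrix (Fin n) (Fin n) ℝ)
    (hA : Metzler n A) (hB : ∀ i j : Fin n, 0 ≤ B i j) :
    (∃ v : Fin n → ℝ, (∀ i, 0 < v i) ∧ ∀ i, (A + B).mulVec v i < 0) ↔
      ∀ x : ℝ → (Fin n → ℝ),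
        (∀ t : ℝ, 0 ≤ t → HasDerivWithinAt x ((A + B).mulVec (x t)) (Set.Ici 0) t) →
        Filter.Tendsto x Filter.atTop (nhds 0) :=
  positive_linear_undelayed_gas_general fun i j hij ↦ add_nonneg (hA i j hij) (hB i j)
end
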